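/- For five general points p_1,…,p_5 of multiplicity 6 and a general point p_0: ℓ(L(13, 2, 6^5)) = 2 (virtual dimension −4); ℓ(L(14, 3, 6^5)) = 9 (virtual dimension 8); ℓ(L(12, 0, 6^5)) = 0 (virtual dimension −15); ℓ(L(13, 1, 6^5)) = 4 (virtual dimension −2); ℓ(L(14, 2, 6^5)) = 12 (virtual dimension 11); ℓ(L(13, 0, 6^5)) = 5 (virtual dimension −1); ℓ(L(14, 1, 6^5)) = 14 (virtual dimension 13); and ℓ(L(14, 0, 6^5)) = 15 (virtual dimension 14); in particular all these systems are special. -/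

import Mathlib

open MvPolynomial

/-- The iterated partial derivative corresponding to the multi-index `ν`. -/
noncomputable def mderiv (ν : Fin 3 → ℕ) :
    MvPolynomial (Fin 3) ℂ →ₗ[ℂ] MvPolynomial (Fin 3) ℂ :=
  ((pderiv (R := ℂ) (0 : Fin 3)).toLinearMap ^ ν 0) ∘ₗ
  ((pderiv (R := ℂ) (1 : Fin 3)).toLinearMap ^ ν 1) ∘ₗ
  ((pderiv (R := ℂ) (2 : Fin 3)).toLinearMap ^ ν 2)

/-- The linear system `L(d; m)` of homogeneous forms of degree `d` in three variables
all of whose partial derivatives of order `< m i` vanish at the point `p i`,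
i.e. plane curves of degree `d` with multiplicity at least `m i` at `p i`. -/
noncomputable def linSys {k : ℕ} (p : Fin k → Fin 3 → ℂ) (d : ℕ) (m : Fin k → ℕ) :
    Submodule ℂ (MvPolynomial (Fin 3) ℂ) :=
  (homogeneousSubmodule (Fin 3) ℂ d) ⊓
    ⨅ (i : Fin k), ⨅ (ν : Fin 3 → ℕ), ⨅ (_ : ν 0 + ν 1 + ν 2 < m i),
      LinearMap.ker ((aeval (p i)).toLinearMap ∘ₗ mderiv ν)

/-- The projective dimension `ℓ` of the linear system (`-1` means empty). -/
noncomputable def projDim {k : ℕ} (p : Fin k → Fin 3 → ℂ) (d : ℕ) (m : Fin k → ℕ) : ℤ :=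
  (Module.finrank ℂ (linSys p d m) : ℤ) - 1

/-- The virtual dimension `v = d(d+3)/2 - ∑ mᵢ(mᵢ+1)/2`. -/
def virtDim {k : ℕ} (d : ℕ) (m : Fin k → ℕ) : ℤ :=
  ((d : ℤ) * (d + 3)) / 2 - ∑ i : Fin k, ((m i : ℤ) * (m i + 1)) / 2

/-- The quasi-homogeneous multiplicity vector `(m₀, 6, …, 6)` on `n + 1` points. -/
def qh (n m0 : ℕ) : Fin (n + 1) → ℕ := fun i => if i = 0 then m0 else 6

/-- A property `Q` of configurations of `k` points of `ℙ²` (given by nonzero homogeneous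
coordinate vectors) holds for points in general position: there is a nonzero polynomial
in the coordinates such that `Q` holds whenever it does not vanish. -/
def Generically (k : ℕ) (Q : (Fin k → Fin 3 → ℂ) → Prop) : Prop :=
  ∃ P : MvPolynomial (Fin k × Fin 3) ℂ, P ≠ 0 ∧
    ∀ p : Fin k → Fin 3 → ℂ, (∀ i, p i ≠ 0) →
      eval (fun x => p x.1 x.2) P ≠ 0 → Q p

/-!
Write the system as `L(2m + k; m₀, m⁵)`. The conic through the five points has intersection number
`-(m - 2k)` with it, splits off `m - 2k` times, and leaves `L(5k; m₀, (2k)⁵)`, which has the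
expected dimension `5 * (k + 1).choose 2 - (m₀ + 1).choose 2`.

The lower bound holds at every configuration: multiply the residual system by the power of the
conic and count conditions there. By Euler's identity, a form of degree at least `n` has
multiplicity `> n` at `p` as soon as the single homogeneous component of degree `n` of its Taylor
expansion at `p` vanishes, so that a point of multiplicity `n + 1` costs `(n + 2).choose 2`.

By semicontinuity of kernels, the upper bound is only needed at one configuration: five points of
the conic `y² = xz`, and `(0 : 1 : 0)` off it. Restricting to the conic again and again, where
forms become polynomials in one variable with prescribed roots, bounds the dimension of
`L(2m + k; 0, m⁵)`. The point off the conic lowers it by `(m₀ + 1).choose 2`, because the products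
of `(y² - xz) ^ m * y ^ (k + 1 - m₀)` with the forms of degree `m₀ - 1` all lie in that system, and
none but zero has multiplicity `m₀` there.
-/

/-! ### Linear algebra -/

section LinearAlgebra

variable {K V W : Type*} [Field K] [AddCommGroup V] [Module K V] [AddCommGroup W] [Module K W]

lemma finrank_map_add_finrank_inf_ker (L : Submodule K V) [Module.Finite K L] (f : V →ₗ[K] W) :
    Module.finrank K (L.map f) + Module.finrank K ↥(L ⊓ LinearMap.ker f) =
      Module.finrank K L := by
  rw [← (f.domRestrict L).finrank_range_add_finrank_ker, LinearMap.range_domRestrict,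
    LinearMap.ker_domRestrict, ← Submodule.map_comap_subtype, Submodule.finrank_map_subtype_eq]

lemma finrank_map_mulLeft {A : Type*} [Ring A] [NoZeroDivisors A] [Algebra K A] {a : A}
    (ha : a ≠ 0) (L : Submodule K A) :
    Module.finrank K (L.map (LinearMap.mulLeft K a)) = Module.finrank K L :=
  (Submodule.equivMapOfInjective _ (mul_right_injective₀ ha) L).finrank_eq.symm

lemma finrank_le_of_forall_dvd {L : Submodule K (Polynomial K)} {Q : Polynomial K} (hQ : Q ≠ 0)
    {N : ℕ} (hdeg : ∀ f ∈ L, f.natDegree ≤ N) (hdvd : ∀ f ∈ L, Q ∣ f) :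
    Module.finrank K L ≤ N + 1 - Q.natDegree := by
  have hL : L ≤ (Polynomial.degreeLT K (N + 1 - Q.natDegree)).map (LinearMap.mulLeft K Q) := by
    intro f hf
    obtain ⟨R, rfl⟩ := hdvd f hf
    refine ⟨R, Polynomial.mem_degreeLT.mpr ?_, rfl⟩
    rcases eq_or_ne R 0 with rfl | hR
    · simp
    have h := hdeg _ hf
    rw [Polynomial.natDegree_mul hQ hR] at h
    rw [Polynomial.degree_eq_natDegree hR]
    exact_mod_cast (by omega : R.natDegree < N + 1 - Q.natDegree)
  refine (Submodule.finrank_mono hL).trans_eq ?_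
  rw [finrank_map_mulLeft hQ, (Polynomial.degreeLTEquiv K _).finrank_eq, Module.finrank_fin_fun]

end LinearAlgebra

/-! ### Semicontinuity of kernels in polynomial families -/

section Semicontinuity

variable {τ : Type*}

lemma exists_eval_eq_det {R n : Type*} [CommRing R] [Fintype n] [DecidableEq n]
    {A : (τ → R) → Matrix n n R}
    (hA : ∀ i j, ∃ P : MvPolynomial τ R, ∀ x, eval x P = A x i j) :
    ∃ P : MvPolynomial τ R, ∀ x, eval x P = (A x).det := by
  choose P hP using hA
  refine ⟨(Matrix.of P).det, fun x => ?_⟩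
  rw [RingHom.map_det]
  congr 1
  ext i j
  simp [hP]

variable {K V : Type*} [Field K] [AddCommGroup V] [Module K V]

lemma finrank_ker_le_of_injective_domRestrict {W : Type*} [AddCommGroup W] [Module K W]
    [Module.Finite K V] {S U : Submodule K V} (hSU : IsCompl S U) {f : V →ₗ[K] W}
    (hf : Function.Injective (f.domRestrict U)) :
    Module.finrank K (LinearMap.ker f) ≤ Module.finrank K S := by
  have h := Submodule.finrank_add_finrank_le_of_disjoint
    (LinearMap.injective_domRestrict_iff.mp hf : Disjoint _ _)
  rw [← Submodule.finrank_add_eq_of_isCompl hSU] at h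
  omega

/-- A witness is the maximal minor of `Φ` that is nonzero at `q`. -/
lemma exists_eval_ne_zero_finrank_ker_le [Module.Finite K V] {ι : Type*} [Finite ι]
    {Φ : (τ → K) → V →ₗ[K] ι → K}
    (hΦ : ∀ v j, ∃ P : MvPolynomial τ K, ∀ x, eval x P = Φ x v j) (q : τ → K) :
    ∃ P : MvPolynomial τ K, eval q P ≠ 0 ∧ ∀ x, eval x P ≠ 0 →
      Module.finrank K (LinearMap.ker (Φ x)) ≤ Module.finrank K (LinearMap.ker (Φ q)) := by
  classical
  have := Fintype.ofFinite ι
  obtain ⟨U, hU⟩ := (LinearMap.ker (Φ q)).exists_isCompl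
  obtain ⟨g, hg⟩ := ((Φ q).domRestrict U).exists_leftInverse_of_injective
    (LinearMap.ker_eq_bot.mpr (LinearMap.injective_domRestrict_iff.mpr hU.disjoint.symm))
  let b := Module.finBasis K U
  have hentry (i l) : ∃ P : MvPolynomial τ K, ∀ x,
      eval x P = LinearMap.toMatrix b b (g ∘ₗ (Φ x).domRestrict U) i l := by
    choose P hP using hΦ (b l)
    refine ⟨∑ j, C (b.repr (g fun j' => if j = j' then 1 else 0) i) * P j, fun x => ?_⟩
    rw [LinearMap.toMatrix_apply, LinearMap.comp_apply, LinearMap.domRestrict_apply,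
      LinearMap.pi_apply_eq_sum_univ g]
    simp [hP, mul_comm]
  obtain ⟨P, hP⟩ := exists_eval_eq_det hentry
  simp only [LinearMap.det_toMatrix] at hP
  refine ⟨P, by simp [hP, hg], fun x hx => finrank_ker_le_of_injective_domRestrict hU ?_⟩
  rw [hP] at hx
  exact Function.Injective.of_comp (f := g) ((g ∘ₗ _).equivOfDetNeZero hx).injective

end Semicontinuity

/-! ### Taylor expansion -/

section Taylor

variable {σ R : Type*} [CommSemiring R]

/-- The Taylor expansion of a polynomial at the point `p`, that is, the polynomial `F(X + p)`. -/
noncomputable def taylorAt (p : σ → R) : MvPolynomial σ R →ₐ[R] MvPolynomial σ R :=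
  aeval fun i => X i + C (p i)

lemma taylorAt_X (p : σ → R) (i : σ) : taylorAt p (X i) = X i + C (p i) := by
  simp [taylorAt]

lemma aeval_taylorAt {A : Type*} [CommSemiring A] [Algebra R A] (g : σ → A) (p : σ → R)
    (F : MvPolynomial σ R) :
    aeval g (taylorAt p F) = aeval (fun i => g i + algebraMap R A (p i)) F := by
  rw [taylorAt, comp_aeval_apply]
  simp

lemma constantCoeff_taylorAt (p : σ → R) (F : MvPolynomial σ R) :
    constantCoeff (taylorAt p F) = aeval p F := by
  simpa using aeval_taylorAt (0 : σ → R) p F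

lemma taylorAt_injective {R : Type*} [CommRing R] (p : σ → R) :
    Function.Injective (taylorAt p) := by
  refine Function.LeftInverse.injective (g := taylorAt (-p)) fun F => ?_
  rw [taylorAt, aeval_taylorAt]
  simp

lemma totalDegree_taylorAt_le (p : σ → R) (F : MvPolynomial σ R) :
    (taylorAt p F).totalDegree ≤ F.totalDegree := by
  rcases subsingleton_or_nontrivial R
  · simp [Subsingleton.elim (taylorAt p F) F]
  rw [taylorAt, aeval_def, eval₂_eq]
  refine totalDegree_finsetSum_le fun ν hν => (totalDegree_mul _ _).trans ?_
  rw [algebraMap_eq, totalDegree_C, zero_add]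
  refine (totalDegree_finsetProd _ _).trans (le_trans ?_ (le_totalDegree hν))
  refine Finset.sum_le_sum fun i _ => (totalDegree_pow _ _).trans ?_
  have hlinear : (X i + C (p i)).totalDegree ≤ 1 :=
    (totalDegree_add _ _).trans (by simp)
  simpa using Nat.mul_le_mul_left (ν i) hlinear

lemma pderiv_taylorAt (p : σ → R) (i : σ) (F : MvPolynomial σ R) :
    pderiv i (taylorAt p F) = taylorAt p (pderiv i F) := by
  induction F using MvPolynomial.induction_on with
  | C a => simp [taylorAt]
  | add F G hF hG => simp [hF, hG]
  | mul_X F j hF =>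
    rw [map_mul, pderiv_mul, pderiv_mul, map_add, map_mul, map_mul, hF, taylorAt_X]
    rcases eq_or_ne j i with rfl | h
    · simp
    · simp [pderiv_X_of_ne h]

lemma pderiv_pow_taylorAt (p : σ → R) (i : σ) (n : ℕ) (F : MvPolynomial σ R) :
    ((pderiv (R := R) i).toLinearMap ^ n) (taylorAt p F) =
      taylorAt p (((pderiv (R := R) i).toLinearMap ^ n) F) := by
  induction n generalizing F with
  | zero => simp
  | succ n ih => simp [pow_succ, Module.End.mul_apply, pderiv_taylorAt, ih]

lemma coeff_pderiv_pow (i : σ) (n : ℕ) (F : MvPolynomial σ R) (ν : σ →₀ ℕ) :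
    coeff ν (((pderiv (R := R) i).toLinearMap ^ n) F) =
      (ν i + 1).ascFactorial n * coeff (ν + Finsupp.single i n) F := by
  induction n generalizing F with
  | zero => simp
  | succ n ih =>
    rw [pow_succ, Module.End.mul_apply, ih, Nat.ascFactorial_succ, Finsupp.single_add, ← add_assoc]
    simp [coeff_pderiv]
    ring

lemma coeff_X_mul_pderiv (i : σ) (F : MvPolynomial σ R) (ν : σ →₀ ℕ) :
    coeff ν (X i * pderiv i F) = ν i * coeff ν F := by
  classical
  rw [coeff_X_mul']
  split_ifs with h
  · have h1 : 1 ≤ ν i := Nat.one_le_iff_ne_zero.mpr (by simpa using h)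
    rw [coeff_pderiv, tsub_add_cancel_of_le (by simpa using h1), mul_comm, Finsupp.tsub_apply,
      Finsupp.single_eq_same, ← Nat.cast_add_one, Nat.sub_add_cancel h1]
  · simp [show ν i = 0 by simpa using h]

lemma mderiv_taylorAt (p ν) (F : MvPolynomial (Fin 3) ℂ) :
    mderiv ν (taylorAt p F) = taylorAt p (mderiv ν F) := by
  simp [mderiv, pderiv_pow_taylorAt]

lemma aeval_mderiv (p : Fin 3 → ℂ) (ν : Fin 3 → ℕ) (F : MvPolynomial (Fin 3) ℂ) :
    aeval p (mderiv ν F) = ((ν 0).factorial * (ν 1).factorial * (ν 2).factorial : ℕ) *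
      coeff (Finsupp.equivFunOnFinite.symm ν) (taylorAt p F) := by
  have hν : Finsupp.equivFunOnFinite.symm ν =
      Finsupp.single 0 (ν 0) + Finsupp.single 1 (ν 1) + Finsupp.single 2 (ν 2) := by
    ext i
    fin_cases i <;> simp
  rw [← constantCoeff_taylorAt, ← mderiv_taylorAt, constantCoeff_eq, hν]
  simp [mderiv, coeff_pderiv_pow, mul_assoc]

end Taylor

/-! ### Multiplicity at a point -/

section Multiplicity

variable {σ R : Type*}

section CommSemiring

variable [CommSemiring R]

/-- The multiplicity of `F` at the point `p`, that is, the least degree of a monomial in the Taylor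
expansion of `F` at `p`; it is `⊤` for the zero polynomial. -/
noncomputable def multAt (p : σ → R) (F : MvPolynomial σ R) : ℕ∞ :=
  (taylorAt p F : MvPowerSeries σ R).order

lemma natCast_le_multAt_iff {p : σ → R} {n : ℕ} {F : MvPolynomial σ R} :
    n ≤ multAt p F ↔ ∀ ν : σ →₀ ℕ, ν.degree < n → coeff ν (taylorAt p F) = 0 := by
  refine ⟨fun h ν hν => ?_, fun h => MvPowerSeries.nat_le_order fun ν hν => ?_⟩
  · rw [← coeff_coe]
    exact MvPowerSeries.coeff_of_lt_order (lt_of_lt_of_le (by exact_mod_cast hν) h)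
  · rw [coeff_coe]
    exact h ν hν

lemma one_le_multAt_iff {p : σ → R} {F : MvPolynomial σ R} : 1 ≤ multAt p F ↔ aeval p F = 0 := by
  rw [multAt, MvPowerSeries.one_le_order_iff_constCoeff_eq_zero, ← constantCoeff_taylorAt,
    ← MvPowerSeries.coeff_zero_eq_constantCoeff_apply, coeff_coe, constantCoeff_eq]

lemma multAt_eq_zero {p : σ → R} {F : MvPolynomial σ R} (h : aeval p F ≠ 0) : multAt p F = 0 :=
  Order.lt_one_iff.mp (lt_of_not_ge (one_le_multAt_iff.not.mpr h))

lemma multAt_mul [NoZeroDivisors R] (p : σ → R) (F G : MvPolynomial σ R) :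
    multAt p (F * G) = multAt p F + multAt p G := by
  simp [multAt, MvPowerSeries.order_mul]

lemma multAt_pow [Nontrivial R] [NoZeroDivisors R] (p : σ → R) (F : MvPolynomial σ R) (n : ℕ) :
    multAt p (F ^ n) = n • multAt p F := by
  induction n with
  | zero => simp [multAt_eq_zero]
  | succ n ih => rw [pow_succ, multAt_mul, ih, succ_nsmul]

/-- The polynomials, of any degree, vanishing to order at least `n` at the point `p`. -/
noncomputable def fatPoint (p : σ → R) (n : ℕ) : Submodule R (MvPolynomial σ R) where
  carrier := {F | n ≤ multAt p F}
  zero_mem' := by simp [multAt]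
  add_mem' hF hG := by
    simp only [multAt, Set.mem_ofPred_eq, map_add, coe_add] at *
    exact (le_min hF hG).trans MvPowerSeries.min_order_le_add
  smul_mem' c F hF := by
    simp only [multAt, Set.mem_ofPred_eq, map_smul, coe_smul] at *
    exact hF.trans MvPowerSeries.le_order_smul

lemma mem_fatPoint {p : σ → R} {n : ℕ} {F : MvPolynomial σ R} :
    F ∈ fatPoint p n ↔ n ≤ multAt p F :=
  Iff.rfl

lemma fatPoint_zero (p : σ → R) : fatPoint p 0 = ⊤ :=
  eq_top_iff.mpr fun _ _ => by simp [mem_fatPoint]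

end CommSemiring

section CommRing

variable [CommRing R]

lemma multAt_le_totalDegree (p : σ → R) {F : MvPolynomial σ R} (hF : F ≠ 0) :
    multAt p F ≤ F.totalDegree := by
  obtain ⟨ν, hν⟩ := ne_zero_iff.mp ((map_ne_zero_iff _ (taylorAt_injective p)).mpr hF)
  rw [← coeff_coe] at hν
  refine (MvPowerSeries.order_le hν).trans ?_
  rw [coeff_coe] at hν
  exact_mod_cast (le_totalDegree (mem_support_iff.mpr hν)).trans (totalDegree_taylorAt_le p F)

lemma pow_dvd_aeval_of_le_multAt {A : Type*} [CommRing A] [Algebra R A] {g : σ → A} {p : σ → R}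
    {a : A} {F : MvPolynomial σ R} {n : ℕ} (hF : n ≤ multAt p F)
    (hg : ∀ i, a ∣ g i - algebraMap R A (p i)) : a ^ n ∣ aeval g F := by
  have hgF : aeval g F = aeval (fun i => g i - algebraMap R A (p i)) (taylorAt p F) := by
    simp [aeval_taylorAt]
  rw [hgF, aeval_def, eval₂_eq]
  refine Finset.dvd_sum fun ν hν => Dvd.dvd.mul_left ?_ _
  have hn : n ≤ ν.degree := by
    by_contra! hlt
    exact mem_support_iff.mp hν (natCast_le_multAt_iff.mp hF ν hlt)
  refine (pow_dvd_pow _ hn).trans ?_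
  rw [Finsupp.degree_apply, ← Finset.prod_pow_eq_pow_sum]
  exact Finset.prod_dvd_prod_of_dvd _ _ fun i _ => pow_dvd_pow_of_dvd (hg i) _

end CommRing

end Multiplicity

/-! ### Conditions imposed by fat points on forms -/

section Conditions

variable {σ R : Type*}

instance [CommSemiring R] [Finite σ] (d : ℕ) : Module.Finite R (homogeneousSubmodule σ R d) :=
  Module.Finite.iff_fg.mpr (homogeneousSubmodule_fg σ R d)

lemma finrank_homogeneousSubmodule [CommRing R] [Nontrivial R] [Fintype σ] (d : ℕ) :
    Module.finrank R (homogeneousSubmodule σ R d) = (Fintype.card σ).multichoose d := by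
  classical
  have hset : {ν : σ →₀ ℕ | ν.degree = d} =
      (Finset.finsuppAntidiag (Finset.univ : Finset σ) d : Set (σ →₀ ℕ)) := by
    ext ν
    simp [Finset.mem_finsuppAntidiag, Finsupp.degree_eq_sum]
  rw [homogeneousSubmodule_eq_finsupp_supported, hset,
    (AddMonoidAlgebra.supportedEquivFinsupp _).finrank_eq, Module.finrank_finsupp_self]
  simp [Finset.card_finsuppAntidiag_nat_eq_multichoose]

lemma finrank_homogeneousSubmodule_fin_three [CommRing R] [Nontrivial R] (d : ℕ) :
    Module.finrank R (homogeneousSubmodule (Fin 3) R d) = (d + 2).choose 2 := by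
  rw [finrank_homogeneousSubmodule, Fintype.card_fin, Nat.multichoose_eq, add_comm,
    Nat.add_sub_assoc (by decide)]
  exact Nat.choose_symm_add

/-- Euler's identity for `F`, read off at the monomial `ν` of the Taylor expansion. -/
lemma sub_degree_mul_coeff_taylorAt [CommRing R] [Fintype σ] (p : σ → R) {F : MvPolynomial σ R}
    {d : ℕ} (hF : F.IsHomogeneous d) (ν : σ →₀ ℕ) :
    ((d : R) - ν.degree) * coeff ν (taylorAt p F) =
      ∑ i, p i * (coeff (ν + Finsupp.single i 1) (taylorAt p F) * (ν i + 1)) := by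
  have h := congrArg (fun G => coeff ν (taylorAt p G)) hF.sum_X_mul_pderiv
  simp only [map_sum, map_mul, taylorAt_X, ← pderiv_taylorAt, add_mul, Finset.sum_add_distrib,
    coeff_add, coeff_sum, coeff_X_mul_pderiv, coeff_C_mul, coeff_pderiv, ← Finset.sum_mul,
    map_nsmul, coeff_smul] at h
  rw [sub_mul, sub_eq_iff_eq_add', Finsupp.degree_eq_sum, Nat.cast_sum, h]
  simp

lemma natCast_succ_le_multAt_iff [CommRing R] [NoZeroDivisors R] [CharZero R] [Finite σ]
    {p : σ → R} {F : MvPolynomial σ R} {d n : ℕ} (hF : F.IsHomogeneous d) (hn : n ≤ d) :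
    (n + 1 : ℕ) ≤ multAt p F ↔ homogeneousComponent n (taylorAt p F) = 0 := by
  rw [natCast_le_multAt_iff]
  constructor
  · intro h
    ext ν
    rw [coeff_homogeneousComponent, coeff_zero]
    split_ifs with hν
    · exact h ν (by omega)
    · rfl
  · intro h
    have := Fintype.ofFinite σ
    have hvanish (e) (he : e ≤ n) : ∀ ν : σ →₀ ℕ, ν.degree = e → coeff ν (taylorAt p F) = 0 := by
      induction he using Nat.decreasingInduction with
      | self =>
        intro ν hν
        simpa [coeff_homogeneousComponent, hν] using congrArg (coeff ν) h
      | of_succ e he ih =>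
        intro ν hν
        have hEuler := sub_degree_mul_coeff_taylorAt p hF ν
        rw [Finset.sum_eq_zero fun i _ => by rw [ih _ (by simp [hν]), zero_mul, mul_zero]] at hEuler
        refine (mul_eq_zero.mp hEuler).resolve_left (sub_ne_zero.mpr ?_)
        exact_mod_cast (by omega : d ≠ ν.degree)
    exact fun ν hν => hvanish _ (by omega) ν rfl

variable {K : Type*} [Field K] [CharZero K]

lemma finrank_le_finrank_inf_fatPoint_add [Fintype σ] {L : Submodule K (MvPolynomial σ K)} {d n : ℕ}
    (hL : L ≤ homogeneousSubmodule σ K d) (hn : n ≤ d) (p : σ → K) :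
    Module.finrank K L ≤
      Module.finrank K ↥(L ⊓ fatPoint p (n + 1)) + (Fintype.card σ).multichoose n := by
  have : Module.Finite K L := Submodule.finiteDimensional_of_le hL
  rw [← finrank_map_add_finrank_inf_ker L (homogeneousComponent n ∘ₗ (taylorAt p).toLinearMap),
    add_comm, ← finrank_homogeneousSubmodule (R := K)]
  refine add_le_add (Submodule.finrank_mono ?_) (Submodule.finrank_mono ?_)
  · rintro F ⟨hF, hF0⟩
    exact ⟨hF, (natCast_succ_le_multAt_iff (hL hF) hn).mpr (by simpa using hF0)⟩
  · rintro _ ⟨F, -, rfl⟩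
    exact homogeneousComponent_isHomogeneous _ _

lemma finrank_le_finrank_inf_fatPoint_add_choose {L : Submodule K (MvPolynomial (Fin 3) K)}
    {d n : ℕ} (hL : L ≤ homogeneousSubmodule (Fin 3) K d) (hn : n ≤ d + 1) (p : Fin 3 → K) :
    Module.finrank K L ≤ Module.finrank K ↥(L ⊓ fatPoint p n) + (n + 1).choose 2 := by
  cases n with
  | zero => rw [fatPoint_zero, inf_top_eq]; exact Nat.le_add_right _ _
  | succ n =>
    rw [← finrank_homogeneousSubmodule_fin_three (R := K), finrank_homogeneousSubmodule]
    exact finrank_le_finrank_inf_fatPoint_add hL (by omega) p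

lemma finrank_le_finrank_inf_inf_fatPoint_add {ι : Type*}
    {L : Submodule K (MvPolynomial (Fin 3) K)} {d : ℕ} (hL : L ≤ homogeneousSubmodule (Fin 3) K d)
    (p : ι → Fin 3 → K) {m : ι → ℕ} (s : Finset ι) (hm : ∀ i ∈ s, m i ≤ d + 1) :
    Module.finrank K L ≤ Module.finrank K ↥(L ⊓ s.inf fun i => fatPoint (p i) (m i)) +
      ∑ i ∈ s, (m i + 1).choose 2 := by
  classical
  induction s using Finset.induction_on with
  | empty => rw [Finset.inf_empty, inf_top_eq]; exact Nat.le_add_right _ _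
  | insert j s hj ih =>
    rw [Finset.forall_mem_insert] at hm
    rw [Finset.sum_insert hj, Finset.inf_insert, inf_comm (fatPoint _ _), ← inf_assoc, ← add_assoc]
    exact (ih hm.2).trans (Nat.add_le_add_right
      (finrank_le_finrank_inf_fatPoint_add_choose (inf_le_left.trans hL) hm.1 (p j)) _)

end Conditions

/-! ### Linear systems of plane curves -/

section LinSys

variable {k : ℕ} {p : Fin k → Fin 3 → ℂ} {d e : ℕ} {m a : Fin k → ℕ} {A F : MvPolynomial (Fin 3) ℂ}

lemma mem_linSys_iff : F ∈ linSys p d m ↔ F.IsHomogeneous d ∧ ∀ i, m i ≤ multAt (p i) F := by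
  simp only [linSys, Submodule.mem_inf, mem_homogeneousSubmodule, Submodule.mem_iInf,
    LinearMap.mem_ker, LinearMap.comp_apply, AlgHom.toLinearMap_apply, aeval_mderiv,
    natCast_le_multAt_iff]
  refine and_congr_right fun _ => forall_congr' fun i =>
    Finsupp.equivFunOnFinite.symm.forall_congr fun ν => ?_
  simp [Finsupp.degree_eq_sum, Fin.sum_univ_three, Nat.factorial_ne_zero]

lemma linSys_eq_inf_iInf_fatPoint (p : Fin k → Fin 3 → ℂ) (d : ℕ) (m : Fin k → ℕ) :
    linSys p d m = homogeneousSubmodule (Fin 3) ℂ d ⊓ ⨅ i, fatPoint (p i) (m i) := by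
  ext F
  simp [mem_linSys_iff, mem_fatPoint]

instance (p : Fin k → Fin 3 → ℂ) (d : ℕ) (m : Fin k → ℕ) : Module.Finite ℂ (linSys p d m) :=
  Submodule.finiteDimensional_of_le (S₂ := homogeneousSubmodule (Fin 3) ℂ d) inf_le_left

lemma linSys_zero (p : Fin k → Fin 3 → ℂ) (d : ℕ) :
    linSys p d 0 = homogeneousSubmodule (Fin 3) ℂ d := by
  ext F
  simp [mem_linSys_iff]

lemma choose_le_finrank_linSys_add (p : Fin k → Fin 3 → ℂ) (hm : ∀ i, m i ≤ d + 1) :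
    (d + 2).choose 2 ≤ Module.finrank ℂ (linSys p d m) + ∑ i, (m i + 1).choose 2 := by
  have h := finrank_le_finrank_inf_inf_fatPoint_add le_rfl p Finset.univ fun i _ => hm i
  rwa [finrank_homogeneousSubmodule_fin_three, Finset.inf_univ_eq_iInf,
    ← linSys_eq_inf_iInf_fatPoint] at h

lemma mul_mem_linSys (hA : A ∈ linSys p e a) (hF : F ∈ linSys p d m) :
    A * F ∈ linSys p (e + d) (a + m) := by
  rw [mem_linSys_iff] at *
  refine ⟨hA.1.mul hF.1, fun i => ?_⟩
  rw [multAt_mul, Pi.add_apply, Nat.cast_add]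
  exact add_le_add (hA.2 i) (hF.2 i)

lemma pow_mem_linSys (hF : F ∈ linSys p d m) (n : ℕ) : F ^ n ∈ linSys p (n * d) (n • m) := by
  rw [mem_linSys_iff] at *
  refine ⟨mul_comm n d ▸ hF.1.pow n, fun i => ?_⟩
  rw [multAt_pow, Pi.smul_apply, smul_eq_mul, Nat.cast_mul, nsmul_eq_mul]
  gcongr
  exact hF.2 i

lemma finrank_linSys_le_of_mem_linSys (hA : A ∈ linSys p e a) (hA0 : A ≠ 0) (d : ℕ)
    (m : Fin k → ℕ) :
    Module.finrank ℂ (linSys p d m) ≤ Module.finrank ℂ (linSys p (e + d) (a + m)) := by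
  rw [← finrank_map_mulLeft hA0]
  refine Submodule.finrank_mono ?_
  rintro _ ⟨F, hF, rfl⟩
  exact mul_mem_linSys hA hF

lemma finrank_linSys_update_add_choose_le {j : Fin k} (hA : A ∈ linSys p e m)
    (hAj : aeval (p j) A ≠ 0) (r : ℕ) :
    Module.finrank ℂ (linSys p (e + r) (Function.update m j (r + 1))) + (r + 2).choose 2 ≤
      Module.finrank ℂ (linSys p (e + r) m) := by
  have hA0 : A ≠ 0 := by
    rintro rfl
    simp at hAj
  have hmj : m j = 0 := by simpa [multAt_eq_zero hAj] using (mem_linSys_iff.mp hA).2 j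
  have hmul := finrank_map_mulLeft hA0 (homogeneousSubmodule (Fin 3) ℂ r)
  set U := (homogeneousSubmodule (Fin 3) ℂ r).map (LinearMap.mulLeft ℂ A)
  rw [← finrank_homogeneousSubmodule_fin_three (R := ℂ), ← hmul]
  -- A nonzero form `A * G` with `G` of degree `r` has multiplicity at most `r` at `p j`.
  have hdisj : Disjoint (linSys p (e + r) (Function.update m j (r + 1))) U := by
    rw [Submodule.disjoint_def]
    rintro _ hF ⟨G, hG, rfl⟩
    have h := (mem_linSys_iff.mp hF).2 j
    by_contra hG0
    rw [LinearMap.mulLeft_apply, multAt_mul, multAt_eq_zero hAj, zero_add,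
      Function.update_self] at h
    have := h.trans (multAt_le_totalDegree (p j) (right_ne_zero_of_mul hG0))
    have := hG.totalDegree_le
    norm_cast at *
    omega
  rw [← Submodule.finrank_sup_add_finrank_inf_eq, hdisj.eq_bot, finrank_bot, add_zero]
  refine Submodule.finrank_mono (sup_le (fun F hF => ?_) ?_)
  · rw [mem_linSys_iff] at *
    refine ⟨hF.1, fun i => le_trans ?_ (hF.2 i)⟩
    rcases eq_or_ne i j with rfl | hij
    · simp [hmj]
    · simp [hij]
  · rintro _ ⟨G, hG, rfl⟩
    simpa using mul_mem_linSys hA (m := 0) (linSys_zero p r ▸ hG)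

end LinSys

/-! ### General points -/

section Generically

variable {k : ℕ} {Q Q' : (Fin k → Fin 3 → ℂ) → Prop}

lemma Generically.and (hQ : Generically k Q) (hQ' : Generically k Q') :
    Generically k fun p => Q p ∧ Q' p := by
  obtain ⟨P, hP, h⟩ := hQ
  obtain ⟨P', hP', h'⟩ := hQ'
  refine ⟨P * P', mul_ne_zero hP hP', fun p hp hPp => ?_⟩
  rw [eval_mul] at hPp
  exact ⟨h p hp (left_ne_zero_of_mul hPp), h' p hp (right_ne_zero_of_mul hPp)⟩

lemma Generically.mono (hQ : Generically k Q) (h : ∀ p, Q p → Q' p) : Generically k Q' := by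
  obtain ⟨P, hP, hPQ⟩ := hQ
  exact ⟨P, hP, fun p hp hPp => h p (hPQ p hp hPp)⟩

/-- The pairs `(i, ν)` for which `linSys p d m` demands that `mderiv ν F` vanish at `p i`. -/
abbrev LinSysCondition (m : Fin k → ℕ) : Type :=
  {j : Fin k × (Fin 3 → ℕ) // j.2 0 + j.2 1 + j.2 2 < m j.1}

instance (m : Fin k → ℕ) : Finite (LinSysCondition m) := by
  refine (Set.finite_univ.prod (Set.finite_Iic fun _ : Fin 3 => ∑ i, m i)).subset ?_
  rintro ⟨i, ν⟩ (hν : ν 0 + ν 1 + ν 2 < m i)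
  have hi : m i ≤ ∑ i, m i := Finset.single_le_sum (by simp) (Finset.mem_univ i)
  refine ⟨Set.mem_univ _, fun l => ?_⟩
  fin_cases l <;> simp <;> omega

/-- The linear map on forms of degree `d` whose kernel is `linSys p d m`. -/
noncomputable def linSysMap (p : Fin k → Fin 3 → ℂ) (d : ℕ) (m : Fin k → ℕ) :
    homogeneousSubmodule (Fin 3) ℂ d →ₗ[ℂ] LinSysCondition m → ℂ :=
  LinearMap.pi fun j =>
    (aeval (p j.1.1)).toLinearMap ∘ₗ mderiv j.1.2 ∘ₗ (homogeneousSubmodule (Fin 3) ℂ d).subtype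

lemma finrank_ker_linSysMap (p : Fin k → Fin 3 → ℂ) (d : ℕ) (m : Fin k → ℕ) :
    Module.finrank ℂ (LinearMap.ker (linSysMap p d m)) = Module.finrank ℂ (linSys p d m) := by
  have hmap : (LinearMap.ker (linSysMap p d m)).map (Submodule.subtype _) = linSys p d m := by
    ext F
    simp [linSys, linSysMap, funext_iff, and_comm]
  rw [← hmap, Submodule.finrank_map_subtype_eq]

lemma generically_finrank_linSys_le (q : Fin k → Fin 3 → ℂ) (d : ℕ) (m : Fin k → ℕ) :
    Generically k fun p => Module.finrank ℂ (linSys p d m) ≤ Module.finrank ℂ (linSys q d m) := by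
  simp only [← finrank_ker_linSysMap]
  obtain ⟨P, hPq, hP⟩ := exists_eval_ne_zero_finrank_ker_le
    (Φ := fun x : Fin k × Fin 3 → ℂ => linSysMap (fun i l => x (i, l)) d m)
    (fun F j => ⟨rename (Prod.mk j.1.1) (mderiv j.1.2 F), fun x => by
      simp [linSysMap, eval_rename, Function.comp_def, aeval_eq_eval]⟩)
    (Function.uncurry q)
  exact ⟨P, by rintro rfl; simp at hPq, fun p _ hp => hP (Function.uncurry p) hp⟩

end Generically

/-! ### The conic `y² = xz` -/

section Conic

section CommRing

variable (R : Type*) [CommRing R]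

/-- The equation `y² = xz` of a smooth conic in the plane with coordinates `(x : y : z)`. -/
noncomputable def conic : MvPolynomial (Fin 3) R := X 1 ^ 2 - X 0 * X 2

/-- The restriction of polynomials to the conic `y² = xz`, through its parametrization
`t ↦ (1 : t : t²)`. -/
noncomputable def conicPullback : MvPolynomial (Fin 3) R →ₐ[R] Polynomial R :=
  aeval ![1, Polynomial.X, Polynomial.X ^ 2]

/-- A linear section of `conicPullback` on forms of degree `d`, sending `t ^ k` to the monomial of
degree `d` and of degree at most one in `y` that restricts to it. Such a monomial exists only for
`k ≤ 2 * d`; for larger `k` the exponent of `x` is truncated and the value has no meaning. -/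
noncomputable def conicLift (d : ℕ) : Polynomial R →ₗ[R] MvPolynomial (Fin 3) R :=
  (Polynomial.basisMonomials R).constr R fun k =>
    X 0 ^ (d - k % 2 - k / 2) * X 1 ^ (k % 2) * X 2 ^ (k / 2)

variable {R}

/-- The point of the conic `y² = xz` with parameter `t`. -/
def conicPoint (t : R) : Fin 3 → R := ![1, t, t ^ 2]

lemma isHomogeneous_conic : (conic R).IsHomogeneous 2 :=
  ((isHomogeneous_X R 1).pow 2).sub ((isHomogeneous_X R 0).mul (isHomogeneous_X R 2))

lemma taylorAt_conicPoint_conic (t : R) : taylorAt (conicPoint t) (conic R) =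
    X 1 ^ 2 + C (2 * t) * X 1 - X 2 * X 0 - C (t ^ 2) * X 0 - X 2 := by
  simp [conic, conicPoint, taylorAt_X, map_ofNat]
  ring

lemma multAt_conic [Nontrivial R] (t : R) : multAt (conicPoint t) (conic R) = 1 := by
  refine le_antisymm ?_ (one_le_multAt_iff.mpr (by simp [conic, conicPoint]))
  have hz : coeff (Finsupp.single 2 1) (taylorAt (conicPoint t) (conic R)) = -1 := by
    have h : (Finsupp.single 1 2 : Fin 3 →₀ ℕ) ≠ Finsupp.single 2 1 := fun h => by
      simpa using DFunLike.congr_fun h 1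
    simp [taylorAt_conicPoint_conic, coeff_X_pow, coeff_X, coeff_mul_X', h]
  refine (MvPowerSeries.order_le (d := Finsupp.single 2 1) ?_).trans (by simp)
  simp [coeff_coe, hz]

lemma natDegree_conicPullback_le {F : MvPolynomial (Fin 3) R} {d : ℕ} (hF : F.IsHomogeneous d) :
    (conicPullback R F).natDegree ≤ 2 * d := by
  rw [mul_comm]
  refine aeval_natDegree_le F hF.totalDegree_le _ fun i => ?_
  fin_cases i
  · simp
  · exact Polynomial.natDegree_X_le.trans one_le_two
  · exact Polynomial.natDegree_X_pow_le 2

lemma pow_dvd_conicPullback {t : R} {F : MvPolynomial (Fin 3) R} {n : ℕ}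
    (hF : n ≤ multAt (conicPoint t) F) :
    (Polynomial.X - Polynomial.C t) ^ n ∣ conicPullback R F := by
  refine pow_dvd_aeval_of_le_multAt hF fun i => ?_
  fin_cases i
  · simp [conicPoint]
  · simp [conicPoint]
  · simpa [conicPoint] using sub_dvd_pow_sub_pow Polynomial.X (Polynomial.C t) 2

lemma conicLift_X_pow (d k : ℕ) : conicLift R d (Polynomial.X ^ k) =
    X 0 ^ (d - k % 2 - k / 2) * X 1 ^ (k % 2) * X 2 ^ (k / 2) := by
  have h : Polynomial.X ^ k = Polynomial.basisMonomials R k := by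
    simp [Polynomial.coe_basisMonomials, Polynomial.monomial_one_right_eq_X_pow]
  rw [h, conicLift, Module.Basis.constr_basis]

lemma exists_monomial_sub_conicLift_eq_conic_mul {d a b c : ℕ} (h : a + b + c = d + 2) :
    ∃ G : MvPolynomial (Fin 3) R, G.IsHomogeneous d ∧
      X 0 ^ a * X 1 ^ b * X 2 ^ c - conicLift R (d + 2) (Polynomial.X ^ (b + 2 * c)) =
        conic R * G := by
  -- Modulo the conic, `y²` may be replaced by `xz` until the exponent of `y` is at most one.
  induction b using Nat.strong_induction_on generalizing a c with
  | _ b ih =>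
    rcases lt_or_ge b 2 with hb | hb
    · refine ⟨0, isHomogeneous_zero _ _ _, ?_⟩
      rw [conicLift_X_pow, show (b + 2 * c) % 2 = b by omega, show (b + 2 * c) / 2 = c by omega,
        show d + 2 - b - c = a by omega, sub_self, mul_zero]
    · obtain ⟨b, rfl⟩ := Nat.exists_eq_add_of_le' hb
      obtain ⟨G, hG, hG'⟩ := ih b (by omega) (a := a + 1) (c := c + 1) (by omega)
      refine ⟨X 0 ^ a * X 1 ^ b * X 2 ^ c + G, .add ?_ hG, ?_⟩
      · rw [show d = a + b + c by omega]
        exact ((isHomogeneous_X_pow 0 a).mul (isHomogeneous_X_pow 1 b)).mul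
          (isHomogeneous_X_pow 2 c)
      · rw [mul_add, ← hG', show b + 2 * (c + 1) = b + 2 + 2 * c by ring, conic]
        ring

lemma sub_conicLift_conicPullback_mem {F : MvPolynomial (Fin 3) R} {d : ℕ}
    (hF : F.IsHomogeneous (d + 2)) :
    F - conicLift R (d + 2) (conicPullback R F) ∈
      (homogeneousSubmodule (Fin 3) R d).map (LinearMap.mulLeft R (conic R)) := by
  rw [F.as_sum, map_sum, map_sum, ← Finset.sum_sub_distrib]
  refine Submodule.sum_mem _ fun ν hν => ?_
  have hmonomial : monomial ν (coeff ν F) = coeff ν F • (X 0 ^ ν 0 * X 1 ^ ν 1 * X 2 ^ ν 2) := by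
    rw [monomial_eq, Finsupp.prod_fintype _ _ (by simp), Fin.prod_univ_three, smul_eq_C_mul]
  have hpullback : conicPullback R (X 0 ^ ν 0 * X 1 ^ ν 1 * X 2 ^ ν 2) =
      Polynomial.X ^ (ν 1 + 2 * ν 2) := by
    simp [conicPullback, pow_add, pow_mul]
  obtain ⟨G, hG, h⟩ := exists_monomial_sub_conicLift_eq_conic_mul (R := R) (d := d)
    (a := ν 0) (b := ν 1) (c := ν 2) (by
      rw [hF.degree_eq_sum_deg_support hν, ← Finsupp.degree_apply, Finsupp.degree_eq_sum,
        Fin.sum_univ_three])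
  rw [hmonomial, map_smul, map_smul, ← smul_sub, hpullback, h]
  exact Submodule.smul_mem _ _ ⟨G, hG, rfl⟩

lemma exists_eq_conic_mul {F : MvPolynomial (Fin 3) R} {d : ℕ} (hF : F.IsHomogeneous (d + 2))
    (h : conicPullback R F = 0) : ∃ G, G.IsHomogeneous d ∧ F = conic R * G := by
  obtain ⟨G, hG, hFG⟩ := sub_conicLift_conicPullback_mem hF
  exact ⟨G, hG, by simpa [h] using hFG.symm⟩

end CommRing

lemma prod_pow_dvd_conicPullback {K ι : Type*} [Field K] [Fintype ι] {t : ι → K}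
    (ht : Function.Injective t) {F : MvPolynomial (Fin 3) K} {m : ℕ}
    (hF : ∀ i, m ≤ multAt (conicPoint (t i)) F) :
    ∏ i, (Polynomial.X - Polynomial.C (t i)) ^ m ∣ conicPullback K F :=
  Finset.prod_dvd_of_coprime
    (fun _ _ _ _ hij => (Polynomial.pairwise_coprime_X_sub_C ht hij).pow)
    fun i _ => pow_dvd_conicPullback (hF i)

variable {n : ℕ} {t : Fin n → ℂ}

lemma finrank_map_conicPullback_le (ht : Function.Injective t) (d m : ℕ) :
    Module.finrank ℂ ((linSys (fun i => conicPoint (t i)) d fun _ => m).map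
      (conicPullback ℂ).toLinearMap) ≤ 2 * d + 1 - n * m := by
  have hmonic (i) : ((Polynomial.X - Polynomial.C (t i)) ^ m).Monic :=
    (Polynomial.monic_X_sub_C _).pow m
  have hdegree : (∏ i, (Polynomial.X - Polynomial.C (t i)) ^ m).natDegree = n * m := by
    simp [Polynomial.natDegree_prod_of_monic _ _ fun i _ => hmonic i]
  rw [← hdegree]
  refine finrank_le_of_forall_dvd (Polynomial.monic_prod_of_monic _ _ fun i _ => hmonic i).ne_zero
    ?_ ?_
  · rintro _ ⟨F, hF, rfl⟩
    exact natDegree_conicPullback_le hF.1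
  · rintro _ ⟨F, hF, rfl⟩
    exact prod_pow_dvd_conicPullback ht (mem_linSys_iff.mp hF).2

lemma linSys_conicPoint_inf_ker_le (t : Fin n → ℂ) (d m : ℕ) :
    linSys (fun i => conicPoint (t i)) (d + 2) (fun _ => m + 1) ⊓
      LinearMap.ker (conicPullback ℂ).toLinearMap ≤
        (linSys (fun i => conicPoint (t i)) d fun _ => m).map (LinearMap.mulLeft ℂ (conic ℂ)) := by
  rintro F ⟨hF, hF0⟩
  obtain ⟨hFd, hFm⟩ := mem_linSys_iff.mp hF
  obtain ⟨G, hG, rfl⟩ := exists_eq_conic_mul hFd (by simpa using hF0)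
  refine ⟨G, mem_linSys_iff.mpr ⟨hG, fun i => ?_⟩, rfl⟩
  have h := hFm i
  rw [multAt_mul, multAt_conic, Nat.cast_add, Nat.cast_one, add_comm] at h
  exact (ENat.add_le_add_iff_left ENat.one_ne_top).mp h

lemma finrank_linSys_conicPoint_succ_le (ht : Function.Injective t) (d m : ℕ) :
    Module.finrank ℂ (linSys (fun i => conicPoint (t i)) (d + 2) fun _ => m + 1) ≤
      (2 * (d + 2) + 1 - n * (m + 1)) +
        Module.finrank ℂ (linSys (fun i => conicPoint (t i)) d fun _ => m) := by
  rw [← finrank_map_add_finrank_inf_ker _ (conicPullback ℂ).toLinearMap]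
  exact add_le_add (finrank_map_conicPullback_le ht _ _)
    ((Submodule.finrank_mono (linSys_conicPoint_inf_ker_le t d m)).trans
      (Submodule.finrank_map_le _ _))

lemma finrank_linSys_conicPoint_le (ht : Function.Injective t) (k m : ℕ) :
    Module.finrank ℂ (linSys (fun i => conicPoint (t i)) (2 * m + k) fun _ => m) ≤
      (k + 2).choose 2 + ∑ i ∈ Finset.range m, (2 * (2 * (i + 1) + k) + 1 - n * (i + 1)) := by
  induction m with
  | zero =>
    rw [← finrank_homogeneousSubmodule_fin_three (R := ℂ), mul_zero, zero_add]
    exact Submodule.finrank_mono inf_le_left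
  | succ m ih =>
    rw [Finset.sum_range_succ, ← add_assoc, add_comm _ (_ - _ : ℕ),
      show 2 * (m + 1) + k = 2 * m + k + 2 by ring]
    exact (finrank_linSys_conicPoint_succ_le ht _ _).trans (Nat.add_le_add_left ih _)

end Conic

/-! ### Five points of equal multiplicity and one further point -/

section QuasiHom

/-- The quasi-homogeneous multiplicity vector `(m₀, m, …, m)` on `n + 1` points. -/
def quasiHom (n m₀ m : ℕ) : Fin (n + 1) → ℕ := fun i => if i = 0 then m₀ else m

variable {n m₀ m d : ℕ}

lemma quasiHom_add (n a b c d : ℕ) :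
    quasiHom n a b + quasiHom n c d = quasiHom n (a + c) (b + d) := by
  ext i
  simp only [quasiHom, Pi.add_apply]
  split_ifs <;> rfl

lemma smul_quasiHom (n c a b : ℕ) : c • quasiHom n a b = quasiHom n (c * a) (c * b) := by
  ext i
  simp only [quasiHom, Pi.smul_apply, smul_eq_mul]
  split_ifs <;> rfl

lemma quasiHom_le (h₀ : m₀ ≤ d) (h : m ≤ d) (i : Fin (n + 1)) : quasiHom n m₀ m i ≤ d := by
  rw [quasiHom]
  split_ifs <;> assumption

lemma update_quasiHom (n a b m : ℕ) :
    Function.update (quasiHom n a m) 0 b = quasiHom n b m := by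
  ext i
  rcases eq_or_ne i 0 with rfl | h <;> simp [quasiHom, *]

lemma sum_choose_quasiHom (n m₀ m : ℕ) :
    ∑ i, (quasiHom n m₀ m i + 1).choose 2 = (m₀ + 1).choose 2 + n * (m + 1).choose 2 := by
  simp [quasiHom, Fin.sum_univ_succ]

lemma virtDim_eq_choose {k : ℕ} (d : ℕ) (m : Fin k → ℕ) :
    virtDim d m = ((d + 2).choose 2 : ℤ) - 1 - (∑ i, (m i + 1).choose 2 : ℕ) := by
  have hchoose (a : ℕ) : ((a + 1).choose 2 : ℤ) = (a * (a + 1)) / 2 := by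
    rw [Nat.choose_two_right, Nat.add_sub_cancel, mul_comm]
    push_cast
    rfl
  have hd : ((d + 1 : ℕ) : ℤ) * ((d + 1 : ℕ) + 1) = d * (d + 3) + 1 * 2 := by push_cast; ring
  rw [virtDim, hchoose, hd, Int.add_mul_ediv_right _ _ two_ne_zero, add_sub_cancel_right,
    Nat.cast_sum]
  simp only [hchoose]

end QuasiHom

section Binomial

lemma add_two_choose_two_add_two_mul_add_one_choose_two (k : ℕ) :
    (k + 2).choose 2 + (2 * k + 1).choose 2 = 5 * (k + 1).choose 2 + 1 := by
  qify
  simp only [Nat.cast_choose_two]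
  push_cast
  ring

lemma add_two_choose_two_add_choose_two (k j : ℕ) :
    (2 * (2 * k + j) + k + 2).choose 2 + j.choose 2 =
      5 * (k + 1).choose 2 + 1 + 5 * (2 * k + j + 1).choose 2 := by
  qify
  simp only [Nat.cast_choose_two]
  push_cast
  ring

lemma sum_range_tsub_le_choose_two (a m : ℕ) :
    ∑ i ∈ Finset.range m, (a - i) ≤ (a + 1).choose 2 := by
  induction m generalizing a with
  | zero => simp
  | succ m ih =>
    rw [Finset.sum_range_succ']
    rcases a with _ | a
    · simp
    · simp only [Nat.add_sub_add_right, Nat.sub_zero]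
      rw [Nat.choose_succ_succ' (a + 1), Nat.choose_one_right, add_comm]
      exact Nat.add_le_add_left (ih a) _

end Binomial

section FivePoints

variable {k m m₀ : ℕ}

/-- The point `(0 : 1 : 0)` off the conic `y² = xz`, followed by five points on it. -/
noncomputable def conicConfig : Fin 6 → Fin 3 → ℂ :=
  Fin.cons ![0, 1, 0] fun i : Fin 5 => conicPoint (i : ℂ)

lemma linSys_conicConfig (d m : ℕ) : linSys conicConfig d (quasiHom 5 0 m) =
    linSys (fun i : Fin 5 => conicPoint (i : ℂ)) d fun _ => m := by
  ext F
  rw [mem_linSys_iff, mem_linSys_iff, Fin.forall_fin_succ]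
  simp [conicConfig, quasiHom]

lemma finrank_linSys_conicConfig_le (k m : ℕ) :
    Module.finrank ℂ (linSys conicConfig (2 * m + k) (quasiHom 5 0 m)) ≤
      5 * (k + 1).choose 2 + 1 := by
  have ht : Function.Injective fun i : Fin 5 => (i : ℂ) :=
    Nat.cast_injective.comp Fin.val_injective
  rw [linSys_conicConfig, ← add_two_choose_two_add_two_mul_add_one_choose_two]
  refine (finrank_linSys_conicPoint_le ht k m).trans (Nat.add_le_add_left ?_ _)
  convert sum_range_tsub_le_choose_two (2 * k) m using 2 with i
  omega

lemma pow_conic_mul_pow_X_mem_linSys (m r : ℕ) :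
    conic ℂ ^ m * X 1 ^ r ∈ linSys conicConfig (2 * m + r) (quasiHom 5 0 m) := by
  rw [linSys_conicConfig, mem_linSys_iff]
  refine ⟨(isHomogeneous_conic.pow m).mul (isHomogeneous_X_pow 1 r), fun i => ?_⟩
  rw [multAt_mul, multAt_pow, multAt_conic]
  simp

lemma finrank_linSys_conicConfig_add_choose_le (m : ℕ) (h₀ : m₀ ≤ k + 1) :
    Module.finrank ℂ (linSys conicConfig (2 * m + k) (quasiHom 5 m₀ m)) + (m₀ + 1).choose 2 ≤
      5 * (k + 1).choose 2 + 1 := by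
  refine le_trans ?_ (finrank_linSys_conicConfig_le k m)
  cases m₀ with
  | zero => simp
  | succ r =>
    have h := finrank_linSys_update_add_choose_le (j := 0)
      (pow_conic_mul_pow_X_mem_linSys m (k - r)) (by simp [conicConfig, conic]) r
    rwa [update_quasiHom, show 2 * m + (k - r) + r = 2 * m + k by omega] at h

lemma exists_ne_zero_mem_linSys_conic (p : Fin 6 → Fin 3 → ℂ) :
    ∃ Q ∈ linSys p 2 (quasiHom 5 0 1), Q ≠ 0 := by
  refine Submodule.exists_mem_ne_zero_of_ne_bot fun hbot => ?_
  have h := choose_le_finrank_linSys_add p (quasiHom_le (d := 3) (m₀ := 0) (m := 1)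
    (by decide) (by decide))
  rw [sum_choose_quasiHom, hbot, finrank_bot] at h
  exact absurd h (by decide)

lemma le_finrank_linSys_add_choose (p : Fin 6 → Fin 3 → ℂ) (hm : 2 * k ≤ m) (h₀ : m₀ ≤ 5 * k + 1) :
    5 * (k + 1).choose 2 + 1 ≤
      Module.finrank ℂ (linSys p (2 * m + k) (quasiHom 5 m₀ m)) + (m₀ + 1).choose 2 := by
  obtain ⟨j, rfl⟩ := Nat.exists_eq_add_of_le' hm
  obtain ⟨Q, hQ, hQ0⟩ := exists_ne_zero_mem_linSys_conic p
  have hresidual := choose_le_finrank_linSys_add p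
    (quasiHom_le (n := 5) (m := 2 * k) h₀ (by omega))
  have hmul := finrank_linSys_le_of_mem_linSys (pow_mem_linSys hQ j) (pow_ne_zero j hQ0) (5 * k)
    (quasiHom 5 m₀ (2 * k))
  have hcount := add_two_choose_two_add_choose_two k 0
  rw [sum_choose_quasiHom] at hresidual
  rw [smul_quasiHom, quasiHom_add, mul_zero, zero_add, mul_one,
    show j * 2 + 5 * k = 2 * (j + 2 * k) + k by ring] at hmul
  rw [show 2 * (2 * k + 0) + k + 2 = 5 * k + 2 by ring] at hcount
  simp only [Nat.choose_zero_succ, add_zero] at hcount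
  omega

lemma generically_projDim_eq (hm : 2 * k ≤ m) (h₀ : m₀ ≤ k + 1) :
    Generically 6 fun p => projDim p (2 * m + k) (quasiHom 5 m₀ m) =
      5 * (k + 1).choose 2 - (m₀ + 1).choose 2 := by
  refine (generically_finrank_linSys_le conicConfig (2 * m + k) (quasiHom 5 m₀ m)).mono
    fun p hp => ?_
  have hupper := finrank_linSys_conicConfig_add_choose_le m h₀
  have hlower := le_finrank_linSys_add_choose p hm (show m₀ ≤ 5 * k + 1 by omega)
  rw [projDim]
  omega

/-- The conic through the five points has intersection number `-(m - 2 * k)` with the system, and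
splitting it off `m - 2 * k` times accounts for the last binomial coefficient. -/
lemma virtDim_quasiHom (hm : 2 * k ≤ m) : virtDim (2 * m + k) (quasiHom 5 m₀ m) =
    5 * (k + 1).choose 2 - (m₀ + 1).choose 2 - (m - 2 * k).choose 2 := by
  obtain ⟨j, rfl⟩ := Nat.exists_eq_add_of_le hm
  have hsum := sum_choose_quasiHom 5 m₀ (2 * k + j)
  have hcount := add_two_choose_two_add_choose_two k j
  rw [virtDim_eq_choose, Nat.add_sub_cancel_left]
  omega

theorem special_L_five_points_general (hm : 2 * k + 2 ≤ m) (h₀ : m₀ ≤ k + 1)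
    (hne : (m₀ + 1).choose 2 ≤ 5 * (k + 1).choose 2) :
    Generically 6 fun p =>
      projDim p (2 * m + k) (quasiHom 5 m₀ m) = 5 * (k + 1).choose 2 - (m₀ + 1).choose 2 ∧
        projDim p (2 * m + k) (quasiHom 5 m₀ m) >
          max (-1) (virtDim (2 * m + k) (quasiHom 5 m₀ m)) := by
  refine (generically_projDim_eq (by omega) h₀).mono fun p hp => ⟨hp, ?_⟩
  have hpos : 0 < (m - 2 * k).choose 2 := Nat.choose_pos (by omega)
  rw [hp, virtDim_quasiHom (by omega), gt_iff_lt, max_lt_iff]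
  omega

end FivePoints

theorem special_L_five_points :
    virtDim 13 (qh 5 2) = -4 ∧
    virtDim 14 (qh 5 3) = 8 ∧
    virtDim 12 (qh 5 0) = -15 ∧
    virtDim 13 (qh 5 1) = -2 ∧
    virtDim 14 (qh 5 2) = 11 ∧
    virtDim 13 (qh 5 0) = -1 ∧
    virtDim 14 (qh 5 1) = 13 ∧
    virtDim 14 (qh 5 0) = 14 ∧
    Generically 6 (fun p =>
      (projDim p 13 (qh 5 2) = 2 ∧
        projDim p 13 (qh 5 2) > max (-1) (virtDim 13 (qh 5 2))) ∧
      (projDim p 14 (qh 5 3) = 9 ∧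
        projDim p 14 (qh 5 3) > max (-1) (virtDim 14 (qh 5 3))) ∧
      (projDim p 12 (qh 5 0) = 0 ∧
        projDim p 12 (qh 5 0) > max (-1) (virtDim 12 (qh 5 0))) ∧
      (projDim p 13 (qh 5 1) = 4 ∧
        projDim p 13 (qh 5 1) > max (-1) (virtDim 13 (qh 5 1))) ∧
      (projDim p 14 (qh 5 2) = 12 ∧
        projDim p 14 (qh 5 2) > max (-1) (virtDim 14 (qh 5 2))) ∧
      (projDim p 13 (qh 5 0) = 5 ∧
        projDim p 13 (qh 5 0) > max (-1) (virtDim 13 (qh 5 0))) ∧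
      (projDim p 14 (qh 5 1) = 14 ∧
        projDim p 14 (qh 5 1) > max (-1) (virtDim 14 (qh 5 1))) ∧
      (projDim p 14 (qh 5 0) = 15 ∧
        projDim p 14 (qh 5 0) > max (-1) (virtDim 14 (qh 5 0)))) := by
  refine ⟨by decide, by decide, by decide, by decide, by decide, by decide, by decide, by decide,
    .and ?_ <| .and ?_ <| .and ?_ <| .and ?_ <| .and ?_ <| .and ?_ <| .and ?_ ?_⟩
  · exact special_L_five_points_general (k := 1) (m := 6) (m₀ := 2) (by simp) (by simp) (by decide)
  · exact special_L_five_points_general (k := 2) (m := 6) (m₀ := 3) (by simp) (by simp) (by decide)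
  · exact special_L_five_points_general (k := 0) (m := 6) (m₀ := 0) (by simp) (by simp) (by decide)
  · exact special_L_five_points_general (k := 1) (m := 6) (m₀ := 1) (by simp) (by simp) (by decide)
  · exact special_L_five_points_general (k := 2) (m := 6) (m₀ := 2) (by simp) (by simp) (by decide)
  · exact special_L_five_points_general (k := 1) (m := 6) (m₀ := 0) (by simp) (by simp) (by decide)
  · exact special_L_five_points_general (k := 2) (m := 6) (m₀ := 1) (by simp) (by simp) (by decide)
  · exact special_L_five_points_general (k := 2) (m := 6) (m₀ := 0) (by simp) (by simp) (by decide)
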